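/- Let σ be a multiscale substitution scheme in ℝ^d and let {γ_m} be either a Kakutani sequence or a generation sequence of partitions of a prototile T_i ∈ τ_σ. Then for every ε > 0 there exists m_0 ∈ ℕ such that for all m ≥ m_0, every tile in the partition γ_m has diameter less than ε. -/

import Mathlib

/-!
The size of a tile `S` is `(vol S)^(1/d)`. Every tile of the partitions is a rescaled isometric
copy of a prototile, so its diameter is at most a fixed constant times its size, and it suffices
that the sizes tend to zero uniformly (dimension `0` being trivial). A piece of a substituted tile
has size `β` times that of the tile, for one of the finitely many constants of substitution
`β ∈ (0,1)` (`SubstitutesTo.piece`). Hence the size of a tile obtained by `k` substitutions lies in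
a finite set `sizeSet σ s k`, with `s` the size of the original prototile, and is at most `c ^ k * s`
for some `c < 1` independent of `k`.

For generation sequences this bound is the claim. In a Kakutani sequence the maximal size is
strictly decreasing. If it stayed above some `δ > 0`, it would take infinitely many
values in the set of sizes that are at least `δ`; but that set is finite, since only boundedly many
substitutions can precede such a tile.
-/

open MeasureTheory Filter Topology
open scoped Pointwise

noncomputable section

/-- Euclidean space `ℝ^d`. -/
abbrev Euc (d : ℕ) : Type := EuclideanSpace ℝ (Fin d)

/-- A tile in `ℝ^d`: a bounded Lebesgue measurable set of positive measure whose
boundary has measure zero. -/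
def IsTile {d : ℕ} (T : Set (Euc d)) : Prop :=
  Bornology.IsBounded T ∧ NullMeasurableSet T volume ∧ 0 < volume T ∧
    volume (frontier T) = 0

/-- A multiscale substitution scheme in `ℝ^d` on `n` prototiles `T 1, …, T n`,
with `numSub i j` substitution tiles of type `j` in `ω(T i)`, scaling constants
`scale i j k`, constants of substitution
`β_ij^(k) = (vol T_j / vol T_i)^(1/d) · α_ij^(k) ∈ (0,1)`, and a nonempty family
of substitution rules, each rule assigning to every prototile `T i` a partition of
`T i` into sets isometric to the substitution tiles `scale i j k • T j`. -/
structure MSScheme (d n : ℕ) where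
  T : Fin n → Set (Euc d)
  tile : ∀ i, IsTile (T i)
  numSub : Fin n → Fin n → ℕ
  scale : (i j : Fin n) → Fin (numSub i j) → ℝ
  scale_pos : ∀ i j k, 0 < scale i j k
  beta_pos : ∀ i j k,
    0 < ((volume (T j)).toReal / (volume (T i)).toReal) ^ (1 / (d : ℝ)) * scale i j k
  beta_lt_one : ∀ i j k,
    ((volume (T j)).toReal / (volume (T i)).toReal) ^ (1 / (d : ℝ)) * scale i j k < 1
  rules : Set ((i j : Fin n) → Fin (numSub i j) → Set (Euc d))
  rules_nonempty : rules.Nonempty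
  rules_iso : ∀ ϱ ∈ rules, ∀ i j k, ∃ φ : Euc d ≃ᵢ Euc d,
    ϱ i j k = φ '' (scale i j k • T j)
  rules_disjoint : ∀ ϱ ∈ rules, ∀ i : Fin n, ∀ p q : Σ j : Fin n, Fin (numSub i j),
    p ≠ q → Disjoint (interior (ϱ i p.1 p.2)) (interior (ϱ i q.1 q.2))
  rules_cover : ∀ ϱ ∈ rules, ∀ i : Fin n,
    (⋃ p : Σ j : Fin n, Fin (numSub i j), ϱ i p.1 p.2) = T i

/-- The constants of substitution `β_ij^(k) = (vol T_j / vol T_i)^(1/d) · α_ij^(k)`. -/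
def MSScheme.beta {d n : ℕ} (σ : MSScheme d n) (i j : Fin n)
    (k : Fin (σ.numSub i j)) : ℝ :=
  ((volume (σ.T j)).toReal / (volume (σ.T i)).toReal) ^ (1 / (d : ℝ)) * σ.scale i j k

/-- A labeled tile: a subset of `ℝ^d` together with a type label. -/
structure LTile (d n : ℕ) where
  carrier : Set (Euc d)
  type : Fin n

noncomputable instance {d n : ℕ} : DecidableEq (LTile d n) := Classical.decEq _

/-- `SubstitutesTo σ S P` : the labeled tile `S`, a rescaled isometric copy
`φ (a • T_{type S})` of the prototile of its type, is partitioned by the collection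
`P` obtained by applying some substitution rule of the scheme,
`ϱ(a·φ(T_i)) = a·φ(ϱ(T_i))`, with the types of the pieces given by the scheme. -/
def SubstitutesTo {d n : ℕ} (σ : MSScheme d n) (S : LTile d n)
    (P : Finset (LTile d n)) : Prop :=
  ∃ ϱ ∈ σ.rules, ∃ a : ℝ, 0 < a ∧ ∃ φ : Euc d ≃ᵢ Euc d,
    S.carrier = φ '' (a • σ.T S.type) ∧
    P = Finset.image
      (fun p : Σ j : Fin n, Fin (σ.numSub S.type j) =>
        (⟨φ '' (a • ϱ S.type p.1 p.2), p.1⟩ : LTile d n)) Finset.univ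

open Classical in
/-- The tiles of maximal volume in a partition. -/
def maxTiles {d n : ℕ} (P : Finset (LTile d n)) : Finset (LTile d n) :=
  P.filter fun S => ∀ S' ∈ P, volume S'.carrier ≤ volume S.carrier

/-- A Kakutani sequence of partitions of the prototile `T i`: start with the trivial
partition, and at each step substitute exactly the tiles of maximal volume, each
according to an arbitrarily and independently chosen substitution rule. -/
def IsKakutaniSeq {d n : ℕ} (σ : MSScheme d n) (i : Fin n)
    (π : ℕ → Finset (LTile d n)) : Prop :=
  π 0 = {(⟨σ.T i, i⟩ : LTile d n)} ∧
  ∀ m, ∃ repl : LTile d n → Finset (LTile d n),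
    (∀ S ∈ maxTiles (π m), SubstitutesTo σ S (repl S)) ∧
    π (m + 1) = (π m \ maxTiles (π m)) ∪ (maxTiles (π m)).biUnion repl

/-- A generation sequence of partitions of the prototile `T i`: start with the trivial
partition, and at each step substitute all tiles, each according to an arbitrarily
and independently chosen substitution rule. -/
def IsGenSeq {d n : ℕ} (σ : MSScheme d n) (i : Fin n)
    (δ : ℕ → Finset (LTile d n)) : Prop :=
  δ 0 = {(⟨σ.T i, i⟩ : LTile d n)} ∧
  ∀ m, ∃ repl : LTile d n → Finset (LTile d n),
    (∀ S ∈ δ m, SubstitutesTo σ S (repl S)) ∧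
    δ (m + 1) = (δ m).biUnion repl

/-- A marking sequence of a sequence of partitions of `U`: finite sets of (distinct)
points of `U` such that every tile of the `m`-th partition contains exactly one point
of `x m`. -/
def IsMarking {d n : ℕ} (U : Set (Euc d)) (γ : ℕ → Finset (LTile d n))
    (x : ℕ → Finset (Euc d)) : Prop :=
  ∀ m, (↑(x m) : Set (Euc d)) ⊆ U ∧
    ∀ S ∈ γ m, ∃! p, p ∈ x m ∧ p ∈ S.carrier

/-- An `r`-marking sequence: finite sets of (distinct) points of `U` such that every
tile of type `r` of the `m`-th partition contains exactly one point of `x m`, and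
every point of `x m` lies in a tile of type `r`. -/
def IsRMarking {d n : ℕ} (U : Set (Euc d)) (γ : ℕ → Finset (LTile d n))
    (r : Fin n) (x : ℕ → Finset (Euc d)) : Prop :=
  ∀ m, (↑(x m) : Set (Euc d)) ⊆ U ∧
    (∀ S ∈ γ m, S.type = r → ∃! p, p ∈ x m ∧ p ∈ S.carrier) ∧
    ∀ p ∈ x m, ∃ S ∈ γ m, S.type = r ∧ p ∈ S.carrier

/-- A sequence of finite sets of points is uniformly distributed in `U` if the
normalized sampling averages of every continuous function converge to its
normalized Lebesgue integral over `U`. -/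
def MarkingUD {d : ℕ} (U : Set (Euc d)) (x : ℕ → Finset (Euc d)) : Prop :=
  ∀ f : Euc d → ℝ, ContinuousOn f U →
    Tendsto (fun m => (∑ p ∈ x m, f p) / ((x m).card : ℝ)) atTop
      (𝓝 ((∫ t in U, f t) / (volume U).toReal))

/-- Irreducibility: every type `j` is produced from every prototile `T i` by some
finite (positive) number of substitutions. -/
def MSScheme.Irreducible {d n : ℕ} (σ : MSScheme d n) : Prop :=
  ∀ i j : Fin n, Relation.TransGen (fun a b => 0 < σ.numSub a b) i j

/-- `σ.IsClosedPathLogVol i a` : some tile of type `i` produced from `T i` by finitely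
many substitutions has `log (vol T' / vol T_i) = a`; equivalently, `a` is the sum of
`log ((β_ij^(k))^d)` along some closed path from `i` to `i` in the associated graph. -/
def MSScheme.IsClosedPathLogVol {d n : ℕ} (σ : MSScheme d n)
    (i : Fin n) (a : ℝ) : Prop :=
  ∃ m : ℕ, 0 < m ∧ ∃ p : Fin (m + 1) → Fin n, p 0 = i ∧ p (Fin.last m) = i ∧
    ∃ e : (t : Fin m) → Fin (σ.numSub (p t.castSucc) (p t.succ)),
      a = ∑ t : Fin m, Real.log (σ.beta (p t.castSucc) (p t.succ) (e t) ^ d)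

/-- Incommensurability: there are tiles `T'` of type `i` produced from `T i` and `T''`
of type `j` produced from `T j` with `log (vol T' / vol T_i)` not a rational multiple
of `log (vol T'' / vol T_j)`. -/
def MSScheme.Incommensurable {d n : ℕ} (σ : MSScheme d n) : Prop :=
  ∃ (i j : Fin n) (a b : ℝ), σ.IsClosedPathLogVol i a ∧ σ.IsClosedPathLogVol j b ∧
    ∀ q : ℚ, a ≠ (q : ℝ) * b

/-- The matrix `(M_σ)_ij = Σ_k (β_ij^(k))^d`. -/
def Mmat {d n : ℕ} (σ : MSScheme d n) : Matrix (Fin n) (Fin n) ℝ :=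
  Matrix.of fun i j => ∑ k : Fin (σ.numSub i j), σ.beta i j k ^ d

/-- The matrix `(M'_σ)_ij = Σ_k (β_ij^(k))^d · log β_ij^(k)`. -/
def M'mat {d n : ℕ} (σ : MSScheme d n) : Matrix (Fin n) (Fin n) ℝ :=
  Matrix.of fun i j => ∑ k : Fin (σ.numSub i j), σ.beta i j k ^ d * Real.log (σ.beta i j k)

/-- `Q_σ = adj (I − M_σ) / (− tr (adj (I − M_σ) · M'_σ))`. -/
def Qmat {d n : ℕ} (σ : MSScheme d n) : Matrix (Fin n) (Fin n) ℝ :=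
  (-(Matrix.trace ((1 - Mmat σ).adjugate * M'mat σ)))⁻¹ • (1 - Mmat σ).adjugate

/-- The number of tiles of type `r` in a partition. -/
def countType {d n : ℕ} (P : Finset (LTile d n)) (r : Fin n) : ℕ :=
  (P.filter fun S => S.type = r).card

/-- The union of the tiles of type `r` in a partition. -/
def typeUnion {d n : ℕ} (P : Finset (LTile d n)) (r : Fin n) : Set (Euc d) :=
  ⋃ S ∈ P.filter (fun S => S.type = r), S.carrier

/-- A fixed scale scheme: all scaling constants equal the contraction constant `α`. -/
def MSScheme.FixedScale {d n : ℕ} (σ : MSScheme d n) (α : ℝ) : Prop :=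
  α ∈ Set.Ioo (0 : ℝ) 1 ∧ ∀ i j k, σ.scale i j k = α

/-- The substitution matrix `S_ij = k_ij` (as a real matrix). -/
def Smat {d n : ℕ} (σ : MSScheme d n) : Matrix (Fin n) (Fin n) ℝ :=
  Matrix.of fun i j => (σ.numSub i j : ℝ)

/-- A primitive scheme: some power of the substitution matrix is entrywise positive. -/
def MSScheme.Primitive {d n : ℕ} (σ : MSScheme d n) : Prop :=
  ∃ k : ℕ, ∀ i j, 0 < (Smat σ ^ k) i j

end

noncomputable section

/-! ### Rescaled isometric copies -/

theorem volume_isometry_image {d : ℕ} (φ : Euc d ≃ᵢ Euc d) (X : Set (Euc d)) :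
    volume (φ '' X) = volume X := by
  -- Lebesgue measure is a multiple of the isometry invariant Hausdorff measure.
  have h := Measure.isAddLeftInvariant_eq_smul (volume : Measure (Euc d))
    (Measure.hausdorffMeasure (Module.finrank ℝ (Euc d) : ℝ))
  rw [h, Measure.smul_apply, Measure.smul_apply,
    φ.isometry.hausdorffMeasure_image (Or.inr φ.surjective)]

/-- The conjugate `x ↦ a ψ(a⁻¹ x)` of an isometry by a homothety is an isometry. -/
theorem smul_isometry_image {d : ℕ} (ψ : Euc d ≃ᵢ Euc d) {a : ℝ} (ha : 0 < a) :
    ∃ ψ' : Euc d ≃ᵢ Euc d, ∀ X : Set (Euc d), a • (ψ '' X) = ψ' '' (a • X) := by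
  refine ⟨IsometryEquiv.mk' (fun x => a • ψ (a⁻¹ • x)) (fun x => a • ψ.symm (a⁻¹ • x)) ?_ ?_, ?_⟩
  · intro x
    simp [smul_smul, ha.ne']
  · refine Isometry.of_dist_eq fun x y => ?_
    rw [dist_smul₀, ψ.dist_eq, dist_smul₀, ← mul_assoc, norm_inv,
      mul_inv_cancel₀ (norm_ne_zero_iff.2 ha.ne'), one_mul]
  · intro X
    change a • (ψ '' X) = (fun x => a • ψ (a⁻¹ • x)) '' (a • X)
    simp only [← Set.image_smul, Set.image_image, smul_smul, inv_mul_cancel₀ ha.ne', one_smul]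

/-- `S` is a rescaled isometric copy of the prototile of its type. -/
def IsCopy {d n : ℕ} (σ : MSScheme d n) (S : LTile d n) : Prop :=
  ∃ a : ℝ, 0 < a ∧ ∃ φ : Euc d ≃ᵢ Euc d, S.carrier = φ '' (a • σ.T S.type)

/-- The linear size `(vol X)^(1/d)` of a set `X ⊆ ℝ^d`. -/
def linSize {d : ℕ} (X : Set (Euc d)) : ℝ := (volume X).toReal ^ (1 / (d : ℝ))

theorem volume_ne_top {d n : ℕ} (σ : MSScheme d n) (j : Fin n) : volume (σ.T j) ≠ ⊤ :=
  (σ.tile j).1.measure_lt_top.ne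

theorem volume_toReal_pos {d n : ℕ} (σ : MSScheme d n) (j : Fin n) :
    0 < (volume (σ.T j)).toReal :=
  ENNReal.toReal_pos (σ.tile j).2.2.1.ne' (volume_ne_top σ j)

theorem linSize_pos {d n : ℕ} (σ : MSScheme d n) (j : Fin n) : 0 < linSize (σ.T j) :=
  Real.rpow_pos_of_pos (volume_toReal_pos σ j) _

theorem linSize_copy {d : ℕ} (hd : d ≠ 0) (X : Set (Euc d)) (φ : Euc d ≃ᵢ Euc d) {a : ℝ}
    (ha : 0 < a) : linSize (φ '' (a • X)) = a * linSize X := by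
  have hd' : (d : ℝ) ≠ 0 := by exact_mod_cast hd
  rw [linSize, volume_isometry_image, Measure.addHaar_smul_of_nonneg _ ha.le, ENNReal.toReal_mul,
    ENNReal.toReal_ofReal (by positivity), finrank_euclideanSpace_fin,
    Real.mul_rpow (by positivity) ENNReal.toReal_nonneg, ← Real.rpow_natCast, ← Real.rpow_mul ha.le,
    mul_one_div_cancel hd', Real.rpow_one, linSize]

theorem IsCopy.volume_ne_top {d n : ℕ} {σ : MSScheme d n} {S : LTile d n} (h : IsCopy σ S) :
    volume S.carrier ≠ ⊤ := by
  obtain ⟨a, ha, φ, hS⟩ := h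
  rw [hS, volume_isometry_image, Measure.addHaar_smul_of_nonneg _ ha.le]
  exact ENNReal.mul_ne_top ENNReal.ofReal_ne_top (_root_.volume_ne_top σ _)

/-- A copy of the prototile `T_j` has the ratio of diameter to size of `T_j`. -/
theorem IsCopy.diam_eq {d n : ℕ} (hd : d ≠ 0) {σ : MSScheme d n} {S : LTile d n}
    (h : IsCopy σ S) : Metric.diam S.carrier =
      Metric.diam (σ.T S.type) / linSize (σ.T S.type) * linSize S.carrier := by
  obtain ⟨a, ha, φ, hS⟩ := h
  have h0 := (linSize_pos σ S.type).ne'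
  rw [hS, linSize_copy hd _ _ ha, φ.diam_image, diam_smul₀, Real.norm_of_nonneg ha.le]
  field_simp

theorem isCopy_prototile {d n : ℕ} (σ : MSScheme d n) (i : Fin n) :
    IsCopy σ (⟨σ.T i, i⟩ : LTile d n) :=
  ⟨1, one_pos, IsometryEquiv.refl _, by
    change σ.T i = id '' ((1 : ℝ) • σ.T i)
    simp⟩

/-- The pieces of a substituted tile are copies of prototiles, and substitution scales the size by
the constants of substitution. -/
theorem SubstitutesTo.piece {d n : ℕ} (hd : d ≠ 0) {σ : MSScheme d n} {S S' : LTile d n}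
    {P : Finset (LTile d n)} (h : SubstitutesTo σ S P) (hS' : S' ∈ P) :
    IsCopy σ S' ∧ ∃ i j k, linSize S'.carrier = σ.beta i j k * linSize S.carrier := by
  obtain ⟨ϱ, hϱ, a, ha, φ, hS, rfl⟩ := h
  obtain ⟨⟨j, k⟩, -, rfl⟩ := Finset.mem_image.1 hS'
  obtain ⟨ψ, hψ⟩ := σ.rules_iso ϱ hϱ S.type j k
  obtain ⟨ψ', hψ'⟩ := smul_isometry_image ψ ha
  have hs := σ.scale_pos S.type j k
  have key : φ '' (a • ϱ S.type j k) =
      (ψ'.trans φ) '' ((a * σ.scale S.type j k) • σ.T j) := by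
    rw [hψ, hψ', smul_smul, Set.image_image]
    rfl
  refine ⟨⟨_, mul_pos ha hs, _, key⟩, S.type, j, k, ?_⟩
  change linSize (φ '' (a • ϱ S.type j k)) = _
  rw [key, linSize_copy hd _ _ (mul_pos ha hs), hS, linSize_copy hd _ _ ha]
  have h0 := (linSize_pos σ S.type).ne'
  rw [MSScheme.beta, Real.div_rpow ENNReal.toReal_nonneg ENNReal.toReal_nonneg]
  change _ = linSize (σ.T j) / linSize (σ.T S.type) * _ * _
  field_simp

/-! ### The possible sizes of tiles -/

/-- The finite set of all constants of substitution. -/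
def betaSet {d n : ℕ} (σ : MSScheme d n) : Set ℝ :=
  Set.range fun p : (Σ i : Fin n, Σ j : Fin n, Fin (σ.numSub i j)) => σ.beta p.1 p.2.1 p.2.2

/-- The possible sizes of tiles obtained by `k` substitutions from a tile of size `s`. -/
def sizeSet {d n : ℕ} (σ : MSScheme d n) (s : ℝ) : ℕ → Set ℝ
  | 0 => {s}
  | k + 1 => Set.image2 (fun b v => b * v) (betaSet σ) (sizeSet σ s k)

theorem beta_mem_betaSet {d n : ℕ} (σ : MSScheme d n) (i j : Fin n) (k : Fin (σ.numSub i j)) :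
    σ.beta i j k ∈ betaSet σ :=
  ⟨⟨i, j, k⟩, rfl⟩

theorem finite_sizeSet {d n : ℕ} (σ : MSScheme d n) (s : ℝ) (k : ℕ) : (sizeSet σ s k).Finite := by
  induction k with
  | zero => exact Set.finite_singleton s
  | succ k ih => exact Set.Finite.image2 _ (Set.finite_range _) ih

theorem exists_contraction {d n : ℕ} (σ : MSScheme d n) :
    ∃ c : ℝ, 0 ≤ c ∧ c < 1 ∧ ∀ b ∈ betaSet σ, b ≤ c := by
  rcases (betaSet σ).eq_empty_or_nonempty with h | h
  · exact ⟨0, le_rfl, one_pos, by simp [h]⟩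
  · obtain ⟨c, hc, hmax⟩ := Set.exists_max_image (betaSet σ) id (Set.finite_range _) h
    obtain ⟨⟨i, j, k⟩, hp⟩ := id hc
    exact ⟨c, hp ▸ (σ.beta_pos i j k).le, hp ▸ σ.beta_lt_one i j k, hmax⟩

theorem sizeSet_bound {d n : ℕ} {σ : MSScheme d n} {s c : ℝ} (hs : 0 < s)
    (hc0 : 0 ≤ c) (hc : ∀ b ∈ betaSet σ, b ≤ c) (k : ℕ) :
    ∀ v ∈ sizeSet σ s k, 0 < v ∧ v ≤ c ^ k * s := by
  induction k with
  | zero =>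
    rintro v rfl
    simpa using hs
  | succ k ih =>
    rintro _ ⟨b, hb, v, hv, rfl⟩
    obtain ⟨hv0, hv1⟩ := ih v hv
    have hb0 : 0 < b := by
      obtain ⟨⟨i, j, k⟩, rfl⟩ := hb
      exact σ.beta_pos i j k
    refine ⟨mul_pos hb0 hv0, ?_⟩
    calc b * v ≤ c * (c ^ k * s) := mul_le_mul (hc b hb) hv1 hv0.le hc0
      _ = c ^ (k + 1) * s := by ring

theorem finite_sizes_ge {d n : ℕ} (σ : MSScheme d n) {s δ : ℝ} (hs : 0 < s) (hδ : 0 < δ) :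
    {v | (∃ k, v ∈ sizeSet σ s k) ∧ δ ≤ v}.Finite := by
  obtain ⟨c, hc0, hc1, hc⟩ := exists_contraction σ
  obtain ⟨K, hK⟩ := exists_pow_lt_of_lt_one (div_pos hδ hs) hc1
  rw [lt_div_iff₀ hs] at hK
  refine ((Set.finite_Iio K).biUnion fun k _ => finite_sizeSet σ s k).subset ?_
  rintro v ⟨⟨k, hk⟩, hv⟩
  refine Set.mem_biUnion (Set.mem_Iio.2 ?_) hk
  by_contra! hKk
  have h1 := (sizeSet_bound hs hc0 hc k v hk).2
  have h2 : c ^ k ≤ c ^ K := pow_le_pow_of_le_one hc0 hc1.le hKk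
  nlinarith

theorem SubstitutesTo.size_mem {d n : ℕ} (hd : d ≠ 0) {σ : MSScheme d n} {S S' : LTile d n}
    {P : Finset (LTile d n)} (h : SubstitutesTo σ S P) (hS' : S' ∈ P) {s : ℝ} {k : ℕ}
    (hk : linSize S.carrier ∈ sizeSet σ s k) : linSize S'.carrier ∈ sizeSet σ s (k + 1) := by
  obtain ⟨-, i, j, l, he⟩ := h.piece hd hS'
  rw [he]
  exact Set.mem_image2_of_mem (beta_mem_betaSet σ i j l) hk

theorem SubstitutesTo.size_lt {d n : ℕ} (hd : d ≠ 0) {σ : MSScheme d n} {S S' : LTile d n}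
    {P : Finset (LTile d n)} (h : SubstitutesTo σ S P) (hS' : S' ∈ P)
    (h0 : 0 < linSize S.carrier) : linSize S'.carrier < linSize S.carrier := by
  obtain ⟨-, i, j, l, he⟩ := h.piece hd hS'
  rw [he]
  exact mul_lt_of_lt_one_left h0 (σ.beta_lt_one i j l)

/-! ### Generation sequences -/

theorem IsGenSeq.invariant {d n : ℕ} (hd : d ≠ 0) {σ : MSScheme d n} {i : Fin n}
    {γ : ℕ → Finset (LTile d n)} (hγ : IsGenSeq σ i γ) (m : ℕ) :
    ∀ S ∈ γ m, IsCopy σ S ∧ linSize S.carrier ∈ sizeSet σ (linSize (σ.T i)) m := by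
  induction m with
  | zero =>
    rw [hγ.1]
    intro S hS
    obtain rfl := Finset.mem_singleton.1 hS
    exact ⟨isCopy_prototile σ i, rfl⟩
  | succ m ih =>
    obtain ⟨repl, hrepl, hm⟩ := hγ.2 m
    rw [hm]
    intro S' hS'
    obtain ⟨S, hS, hS'⟩ := Finset.mem_biUnion.1 hS'
    exact ⟨((hrepl S hS).piece hd hS').1, (hrepl S hS).size_mem hd hS' (ih S hS).2⟩

theorem IsGenSeq.size_small {d n : ℕ} (hd : d ≠ 0) {σ : MSScheme d n} {i : Fin n}
    {γ : ℕ → Finset (LTile d n)} (hγ : IsGenSeq σ i γ) {δ : ℝ} (hδ : 0 < δ) :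
    ∃ m₀ : ℕ, ∀ m ≥ m₀, ∀ S ∈ γ m, linSize S.carrier < δ := by
  have hs := linSize_pos σ i
  obtain ⟨c, hc0, hc1, hc⟩ := exists_contraction σ
  obtain ⟨K, hK⟩ := exists_pow_lt_of_lt_one (div_pos hδ hs) hc1
  rw [lt_div_iff₀ hs] at hK
  refine ⟨K, fun m hm S hS => ?_⟩
  have h1 := (sizeSet_bound hs hc0 hc m _ (hγ.invariant hd m S hS).2).2
  have h2 : c ^ m ≤ c ^ K := pow_le_pow_of_le_one hc0 hc1.le hm
  nlinarith

/-! ### Kakutani sequences -/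

theorem IsKakutaniSeq.invariant {d n : ℕ} (hd : d ≠ 0) {σ : MSScheme d n} {i : Fin n}
    {γ : ℕ → Finset (LTile d n)} (hγ : IsKakutaniSeq σ i γ) (m : ℕ) :
    ∀ S ∈ γ m, IsCopy σ S ∧ ∃ k, linSize S.carrier ∈ sizeSet σ (linSize (σ.T i)) k := by
  induction m with
  | zero =>
    rw [hγ.1]
    intro S hS
    obtain rfl := Finset.mem_singleton.1 hS
    exact ⟨isCopy_prototile σ i, 0, rfl⟩
  | succ m ih =>
    obtain ⟨repl, hrepl, hm⟩ := hγ.2 m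
    rw [hm]
    intro S' hS'
    rcases Finset.mem_union.1 hS' with hS' | hS'
    · exact ih S' (Finset.mem_sdiff.1 hS').1
    · obtain ⟨S, hS, hS'⟩ := Finset.mem_biUnion.1 hS'
      obtain ⟨-, k, hk⟩ := ih S (Finset.mem_filter.1 hS).1
      exact ⟨((hrepl S hS).piece hd hS').1, k + 1, (hrepl S hS).size_mem hd hS' hk⟩

/-- Every tile of a Kakutani step is strictly smaller than some tile of the preceding partition. -/
theorem IsKakutaniSeq.exists_larger {d n : ℕ} (hd : d ≠ 0) {σ : MSScheme d n} {i : Fin n}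
    {γ : ℕ → Finset (LTile d n)} (hγ : IsKakutaniSeq σ i γ) (m : ℕ) {S' : LTile d n}
    (hS' : S' ∈ γ (m + 1)) : ∃ S ∈ γ m, linSize S'.carrier < linSize S.carrier := by
  obtain ⟨c, hc0, -, hc⟩ := exists_contraction σ
  obtain ⟨repl, hrepl, hm⟩ := hγ.2 m
  rw [hm] at hS'
  rcases Finset.mem_union.1 hS' with hS' | hS'
  · obtain ⟨h1, h2⟩ := Finset.mem_sdiff.1 hS'
    simp only [maxTiles, Finset.mem_filter, h1, true_and] at h2
    push Not at h2
    obtain ⟨S, hS, hlt⟩ := h2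
    refine ⟨S, hS, Real.rpow_lt_rpow ENNReal.toReal_nonneg ?_ (by positivity)⟩
    exact ENNReal.toReal_strict_mono (hγ.invariant hd m S hS).1.volume_ne_top hlt
  · obtain ⟨S, hS, hS'⟩ := Finset.mem_biUnion.1 hS'
    have hSm := (Finset.mem_filter.1 hS).1
    obtain ⟨-, k, hk⟩ := hγ.invariant hd m S hSm
    exact ⟨S, hSm, (hrepl S hS).size_lt hd hS' (sizeSet_bound (linSize_pos σ i) hc0 hc k _ hk).1⟩

theorem IsKakutaniSeq.size_small {d n : ℕ} (hd : d ≠ 0) {σ : MSScheme d n} {i : Fin n}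
    {γ : ℕ → Finset (LTile d n)} (hγ : IsKakutaniSeq σ i γ) {δ : ℝ} (hδ : 0 < δ) :
    ∃ m₀ : ℕ, ∀ m ≥ m₀, ∀ S ∈ γ m, linSize S.carrier < δ := by
  obtain ⟨m₀, hm₀⟩ : ∃ m₀ : ℕ, ∀ S ∈ γ m₀, linSize S.carrier < δ := by
    by_contra! hcon
    -- A tile `M m` of maximal size in each partition; its size is at least `δ`.
    have hM : ∀ m, ∃ S ∈ γ m, ∀ S' ∈ γ m, linSize S'.carrier ≤ linSize S.carrier := fun m =>
      (γ m).exists_max_image (fun S => linSize S.carrier) ((hcon m).imp fun _ h => h.1)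
    choose M hMmem hMmax using hM
    have hanti : StrictAnti fun m => linSize (M m).carrier := by
      refine strictAnti_nat_of_succ_lt fun m => ?_
      obtain ⟨S, hS, hlt⟩ := hγ.exists_larger hd m (hMmem (m + 1))
      exact hlt.trans_le (hMmax m S hS)
    refine Set.infinite_range_of_injective hanti.injective
      ((finite_sizes_ge σ (linSize_pos σ i) hδ).subset ?_)
    rintro _ ⟨m, rfl⟩
    obtain ⟨S, hS, hle⟩ := hcon m
    exact ⟨(hγ.invariant hd m _ (hMmem m)).2, hle.trans (hMmax m S hS)⟩
  refine ⟨m₀, fun m hm => ?_⟩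
  induction m, hm using Nat.le_induction with
  | base => exact hm₀
  | succ m _ ih =>
    intro S' hS'
    obtain ⟨S, hS, hlt⟩ := hγ.exists_larger hd m hS'
    exact hlt.trans (ih S hS)

end

/-- **Lemma 3.4.** In any Kakutani or generation sequence of partitions generated by a
multiscale substitution scheme, for every `ε > 0` all tiles of all sufficiently late
partitions have diameter less than `ε`. -/
theorem tiles_diam_to_zero {d n : ℕ} (σ : MSScheme d n) (i : Fin n)
    (γ : ℕ → Finset (LTile d n))
    (hγ : IsKakutaniSeq σ i γ ∨ IsGenSeq σ i γ) :
    ∀ ε > (0 : ℝ), ∃ m₀ : ℕ, ∀ m ≥ m₀, ∀ S ∈ γ m, Metric.diam S.carrier < ε := by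
  intro ε hε
  rcases eq_or_ne d 0 with rfl | hd
  · exact ⟨0, fun m _ S _ => by rwa [Metric.diam_subsingleton (Set.subsingleton_of_subsingleton)]⟩
  -- `K` bounds the ratio of diameter to size over all prototiles.
  let K : ℝ := ∑ j, Metric.diam (σ.T j) / linSize (σ.T j)
  have hnn : ∀ j, 0 ≤ Metric.diam (σ.T j) / linSize (σ.T j) := fun j =>
    div_nonneg Metric.diam_nonneg (linSize_pos σ j).le
  have hK0 : 0 ≤ K := Finset.sum_nonneg fun j _ => hnn j
  have hK : ∀ j, Metric.diam (σ.T j) / linSize (σ.T j) ≤ K := fun j =>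
    Finset.single_le_sum (f := fun j => Metric.diam (σ.T j) / linSize (σ.T j))
      (fun j _ => hnn j) (Finset.mem_univ j)
  have hδ : 0 < ε / (K + 1) := by positivity
  have hcopy : ∀ m, ∀ S ∈ γ m, IsCopy σ S := fun m S hS =>
    hγ.elim (fun h => (h.invariant hd m S hS).1) (fun h => (h.invariant hd m S hS).1)
  obtain ⟨m₀, hm₀⟩ : ∃ m₀ : ℕ, ∀ m ≥ m₀, ∀ S ∈ γ m, linSize S.carrier < ε / (K + 1) :=
    hγ.elim (fun h => h.size_small hd hδ) (fun h => h.size_small hd hδ)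
  refine ⟨m₀, fun m hm S hS => ?_⟩
  have hlt := hm₀ m hm S hS
  rw [lt_div_iff₀ (by positivity)] at hlt
  have h0 : 0 ≤ linSize S.carrier := Real.rpow_nonneg ENNReal.toReal_nonneg _
  rw [(hcopy m S hS).diam_eq hd]
  nlinarith [mul_le_mul_of_nonneg_right (hK S.type) h0]
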